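/- Suppose 1/s₁ + 1/s₂ < 1 and set k₁(a) = ⌊2k(a)/3⌋. Then lim_{a→0⁺} a·(s₁+pa)^{k₁(a)} = 0. -/

import Mathlib

open MeasureTheory Filter Topology

/-- The W-like map `W_a` with parameters `s₁ s₂ p q r` and perturbation `a`. -/
noncomputable def Wmap (s₁ s₂ p q r a : ℝ) (x : ℝ) : ℝ :=
  if x < 1/2 - (1/2 + r*a)/(s₁ + p*a) then
    1 - (2*(s₁ + p*a)/(s₁ - 1 + p*a - 2*r*a)) * x
  else if x < 1/2 then
    (s₁ + p*a)*(x - 1/2) + 1/2 + r*a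
  else if x < 1/2 + (1/2 + r*a)/(s₂ + q*a) then
    -(s₂ + q*a)*(x - 1/2) + 1/2 + r*a
  else
    1 + (2*(s₂ + q*a)/(s₂ - 1 + q*a - 2*r*a)) * (x - 1)

/-- `k(a)`: the first iterate `j ≥ 1` at which the trajectory of `1/2` under `W_a`
drops below `1/2 − (1/2+ra)/(s₁+pa)`. -/
noncomputable def kIndex (s₁ s₂ p q r a : ℝ) : ℕ :=
  sInf {j : ℕ | 1 ≤ j ∧
    (Wmap s₁ s₂ p q r a)^[j] (1/2) ≤ 1/2 - (1/2 + r*a)/(s₁ + p*a)}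

/-- `k₁(a) = ⌊2k(a)/3⌋`, the integer part of `2k(a)/3`. -/
noncomputable def kIndex1 (s₁ s₂ p q r a : ℝ) : ℕ :=
  2 * kIndex s₁ s₂ p q r a / 3

/-!
Write `t = s₁ + p a`, `u = s₂ + q a` and `ε = r a`. The orbit of `1/2` runs `1/2`, `1/2 + ε`,
`1/2 + ε - u ε`, and from then on follows the branch of slope `t` until time `k`. The fixed point
of that branch is `1/2 - ε / (t - 1)`, and the third point of the orbit lies at distance `ε g`
to its left, where `g = u - 1 - 1 / (t - 1)`. Hence the distance to the fixed point at time
`n + 2 ≤ k` is exactly `ε g t ^ n`; as the orbit has not left the branch before time `k`, this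
gives `ε g t ^ k ≤ t ^ 2 / 2`. The condition `1 / s₁ + 1 / s₂ < 1` says that `g` has a positive
limit as `a → 0⁺`, so `a t ^ k` stays bounded, and
`(a t ^ k₁) ^ 3 ≤ a (a t ^ k) ^ 2` tends to zero.
-/

open Asymptotics

section Asymptotics

variable {α : Type*} {l : Filter α} {a t : α → ℝ} {k m : α → ℕ} {c d : ℕ}

lemma isBigO_mul_pow_pow (hcd : c ≤ d) (ht : ∀ᶠ x in l, 1 ≤ t x)
    (hmk : ∀ᶠ x in l, d * m x ≤ c * k x)
    (hbdd : (fun x => a x * t x ^ k x) =O[l] fun _ => (1 : ℝ)) :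
    (fun x => (a x * t x ^ m x) ^ d) =O[l] fun x => a x ^ (d - c) := by
  have hpow_le : (fun x => (a x * t x ^ m x) ^ d) =O[l]
      fun x => (a x * t x ^ k x) ^ c * a x ^ (d - c) := by
    refine IsBigO.of_bound' ?_
    filter_upwards [ht, hmk] with x htx hmkx
    have ht0 : 0 ≤ t x := zero_le_one.trans htx
    have hsplit : |a x| ^ d = |a x| ^ c * |a x| ^ (d - c) := by
      rw [← pow_add, Nat.add_sub_cancel' hcd]
    simp only [norm_mul, norm_pow, Real.norm_eq_abs, abs_of_nonneg ht0, mul_pow, ← pow_mul, hsplit]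
    have hexp : t x ^ (m x * d) ≤ t x ^ (k x * c) := pow_le_pow_right₀ htx (by linarith)
    calc |a x| ^ c * |a x| ^ (d - c) * t x ^ (m x * d)
        ≤ |a x| ^ c * |a x| ^ (d - c) * t x ^ (k x * c) := by gcongr
      _ = |a x| ^ c * t x ^ (k x * c) * |a x| ^ (d - c) := by ring
  simpa using hpow_le.trans ((hbdd.pow c).mul (isBigO_refl _ l))

lemma tendsto_mul_pow_zero_of_isBigO_one (hcd : c < d) (ha : Tendsto a l (𝓝 0))
    (ht : ∀ᶠ x in l, 1 ≤ t x) (hmk : ∀ᶠ x in l, d * m x ≤ c * k x)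
    (hbdd : (fun x => a x * t x ^ k x) =O[l] fun _ => (1 : ℝ)) :
    Tendsto (fun x => a x * t x ^ m x) l (𝓝 0) := by
  have hrhs : Tendsto (fun x => a x ^ (d - c)) l (𝓝 0) := by
    simpa [(Nat.sub_pos_of_lt hcd).ne'] using ha.pow (d - c)
  have hpow : Tendsto (fun x => (a x * t x ^ m x) ^ d) l (𝓝 0) :=
    (isBigO_mul_pow_pow hcd.le ht hmk hbdd).trans_tendsto hrhs
  rw [← isLittleO_one_iff ℝ] at hpow ⊢
  refine IsLittleO.of_pow (n := d) ?_ (by omega)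
  simpa [Pi.pow_def] using hpow

end Asymptotics

/-- The gap between the third point of the orbit of `1/2` and the fixed point of the branch of
slope `t` to its right, for the W-shaped map with central slopes `t` and `-u`, in units of the
height `ε` of its central peak above `1/2`. -/
noncomputable def fixedPointGap (t u : ℝ) : ℝ :=
  u - 1 - 1 / (t - 1)

lemma fixedPointGap_pos {t u : ℝ} (ht : 1 < t) (hu : 0 < u) (htu : 1 / t + 1 / u < 1) :
    0 < fixedPointGap t u := by
  rw [div_add_div _ _ (by positivity) (by positivity), div_lt_one (by positivity)] at htu
  rw [fixedPointGap, sub_pos, div_lt_iff₀ (sub_pos.2 ht)]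
  linarith

lemma fixedPointGap_le {t u : ℝ} (ht : 1 ≤ t) : fixedPointGap t u ≤ u - 1 :=
  sub_le_self _ (one_div_nonneg.2 (sub_nonneg.2 ht))

lemma continuousAt_fixedPointGap_add_mul {s₁ : ℝ} (hs₁ : s₁ ≠ 1) (s₂ p q : ℝ) :
    ContinuousAt (fun a => fixedPointGap (s₁ + p * a) (s₂ + q * a)) 0 := by
  have hne : s₁ + p * 0 - 1 ≠ 0 := by simpa [sub_eq_zero] using hs₁
  exact .sub (by fun_prop) (.div continuousAt_const (by fun_prop) hne)

section Orbit

variable {s₁ s₂ p q r a x : ℝ} {n : ℕ}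

lemma Wmap_of_mem_increasing_branch (hleft : 1 / 2 - (1 / 2 + r * a) / (s₁ + p * a) ≤ x)
    (hright : x < 1 / 2) :
    Wmap s₁ s₂ p q r a x = (s₁ + p * a) * (x - 1 / 2) + 1 / 2 + r * a := by
  rw [Wmap, if_neg hleft.not_gt, if_pos hright]

lemma Wmap_of_mem_decreasing_branch (hdiv : 0 ≤ (1 / 2 + r * a) / (s₁ + p * a)) (hleft : 1 / 2 ≤ x)
    (hright : x < 1 / 2 + (1 / 2 + r * a) / (s₂ + q * a)) :
    Wmap s₁ s₂ p q r a x = -(s₂ + q * a) * (x - 1 / 2) + 1 / 2 + r * a := by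
  rw [Wmap, if_neg (by linarith), if_neg hleft.not_gt, if_pos hright]

lemma Wmap_iterate_two_half (ht : 0 < s₁ + p * a) (hu : 0 < s₂ + q * a) (hε : 0 ≤ r * a)
    (hsmall : r * a * (s₂ + q * a - 1) < 1 / 2) :
    (Wmap s₁ s₂ p q r a)^[2] (1 / 2) = 1 / 2 - r * a * (s₂ + q * a - 1) := by
  have hdiv : 0 ≤ (1 / 2 + r * a) / (s₁ + p * a) := by positivity
  have hpeak : Wmap s₁ s₂ p q r a (1 / 2) = 1 / 2 + r * a := by
    rw [Wmap_of_mem_decreasing_branch hdiv le_rfl (lt_add_of_pos_right _ (by positivity))]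
    ring
  have hpeak_lt : r * a < (1 / 2 + r * a) / (s₂ + q * a) := by
    rw [lt_div_iff₀ hu]
    linarith
  rw [Function.iterate_succ_apply, Function.iterate_one, hpeak,
    Wmap_of_mem_decreasing_branch hdiv (by linarith) (by linarith)]
  ring

lemma lt_Wmap_iterate_half_of_lt_kIndex (hn : 1 ≤ n) (hnk : n < kIndex s₁ s₂ p q r a) :
    1 / 2 - (1 / 2 + r * a) / (s₁ + p * a) < (Wmap s₁ s₂ p q r a)^[n] (1 / 2) :=
  not_le.1 fun hle => Nat.notMem_of_lt_sInf hnk ⟨hn, hle⟩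

lemma Wmap_iterate_add_two_half (ht : 1 < s₁ + p * a) (hε : 0 < r * a)
    (hsmall : r * a * (s₂ + q * a - 1) < 1 / 2)
    (hgap : 0 ≤ fixedPointGap (s₁ + p * a) (s₂ + q * a)) (hn : n + 2 ≤ kIndex s₁ s₂ p q r a) :
    (Wmap s₁ s₂ p q r a)^[n + 2] (1 / 2) = 1 / 2 - r * a / (s₁ + p * a - 1)
      - fixedPointGap (s₁ + p * a) (s₂ + q * a) * (r * a) * (s₁ + p * a) ^ n := by
  have ht1 : 0 < s₁ + p * a - 1 := sub_pos.2 ht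
  induction n with
  | zero =>
    have hu : 0 < s₂ + q * a := by linarith [fixedPointGap_le (u := s₂ + q * a) ht.le]
    rw [zero_add, Wmap_iterate_two_half (by linarith) hu hε.le hsmall, fixedPointGap]
    ring
  | succ n ih =>
    have horbit := ih (by omega)
    have hleft := lt_Wmap_iterate_half_of_lt_kIndex (n := n + 2) (by omega)
      (show n + 2 < kIndex s₁ s₂ p q r a by omega)
    have hright : (Wmap s₁ s₂ p q r a)^[n + 2] (1 / 2) < 1 / 2 := by
      rw [horbit, sub_sub]
      exact sub_lt_self _ (by positivity)
    have hfixed : (s₁ + p * a) * (r * a / (s₁ + p * a - 1)) =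
        r * a / (s₁ + p * a - 1) + r * a := by
      field_simp
      ring
    rw [Nat.add_right_comm, Function.iterate_succ_apply',
      Wmap_of_mem_increasing_branch hleft.le hright, horbit]
    linear_combination -hfixed

lemma fixedPointGap_mul_pow_kIndex_le (ht : 1 < s₁ + p * a) (hε : 0 < r * a)
    (hsmall : r * a * (s₂ + q * a - 1) < 1 / 2)
    (hgap : 0 ≤ fixedPointGap (s₁ + p * a) (s₂ + q * a)) :
    fixedPointGap (s₁ + p * a) (s₂ + q * a) * (r * a) * (s₁ + p * a) ^ kIndex s₁ s₂ p q r a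
      ≤ (s₁ + p * a) ^ 2 / 2 := by
  have : 0 < s₁ + p * a := by linarith
  rcases le_or_gt (kIndex s₁ s₂ p q r a) 2 with hk | hk
  · have hgap_le : fixedPointGap (s₁ + p * a) (s₂ + q * a) * (r * a) ≤ 1 / 2 := by
      linarith [mul_le_mul_of_nonneg_right (fixedPointGap_le (u := s₂ + q * a) ht.le) hε.le]
    calc _ ≤ 1 / 2 * (s₁ + p * a) ^ 2 := by
          gcongr
          exact ht.le
      _ = _ := by ring
  · obtain ⟨n, hn⟩ := Nat.exists_eq_add_of_le' (Nat.succ_le_of_lt hk)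
    have hbefore := lt_Wmap_iterate_half_of_lt_kIndex (n := n + 2) (by omega)
      (show n + 2 < kIndex s₁ s₂ p q r a by omega)
    rw [Wmap_iterate_add_two_half ht hε hsmall hgap (by omega), add_div] at hbefore
    have hfixed : r * a / (s₁ + p * a) ≤ r * a / (s₁ + p * a - 1) :=
      div_le_div_of_nonneg_left hε.le (by linarith) (by linarith)
    have hdist : fixedPointGap (s₁ + p * a) (s₂ + q * a) * (r * a) * (s₁ + p * a) ^ n
        ≤ 1 / 2 / (s₁ + p * a) := by linarith
    calc _ = fixedPointGap (s₁ + p * a) (s₂ + q * a) * (r * a) * (s₁ + p * a) ^ n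
          * (s₁ + p * a) ^ 3 := by rw [hn]; ring
      _ ≤ 1 / 2 / (s₁ + p * a) * (s₁ + p * a) ^ 3 := by gcongr
      _ = _ := by field_simp

end Orbit

lemma tendsto_add_mul_nhdsGT_zero (s p : ℝ) : Tendsto (fun a => s + p * a) (𝓝[>] 0) (𝓝 s) := by
  have h : ContinuousAt (fun a : ℝ => s + p * a) 0 := by fun_prop
  simpa using h.tendsto.mono_left nhdsWithin_le_nhds

section Limit

variable {s₁ s₂ r : ℝ}

lemma mul_pow_kIndex_isBigO_one (hs₁ : 1 < s₁) (hgap : 0 < fixedPointGap s₁ s₂) (p q : ℝ)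
    (hr : 0 < r) :
    (fun a => a * (s₁ + p * a) ^ kIndex s₁ s₂ p q r a) =O[𝓝[>] 0] fun _ => (1 : ℝ) := by
  have ht := tendsto_add_mul_nhdsGT_zero s₁ p
  have hgap_lim : Tendsto (fun a => fixedPointGap (s₁ + p * a) (s₂ + q * a)) (𝓝[>] 0)
      (𝓝 (fixedPointGap s₁ s₂)) := by
    simpa using (continuousAt_fixedPointGap_add_mul hs₁.ne' s₂ p q).tendsto.mono_left
      nhdsWithin_le_nhds
  have hsmall : ∀ᶠ a in 𝓝[>] (0 : ℝ), r * a * (s₂ + q * a - 1) < 1 / 2 := by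
    have hcont : ContinuousAt (fun a => r * a * (s₂ + q * a - 1)) 0 := by fun_prop
    exact (hcont.tendsto.mono_left nhdsWithin_le_nhds).eventually_lt_const (by norm_num)
  have hbound_lim := (ht.pow 2).div (hgap_lim.const_mul (2 * r)) (by positivity)
  refine IsBigO.trans (IsBigO.of_bound' ?_) (hbound_lim.isBigO_one ℝ)
  filter_upwards [ht.eventually_const_lt hs₁, hgap_lim.eventually_const_lt hgap, hsmall,
    self_mem_nhdsWithin] with a hta hgapa hsmalla (ha : 0 < a)
  have hle := fixedPointGap_mul_pow_kIndex_le hta (mul_pos hr ha) hsmalla hgapa.le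
  have : 0 < s₁ + p * a := by linarith
  rw [Real.norm_of_nonneg (by positivity)]
  refine le_trans ?_ (Real.le_norm_self _)
  rw [Pi.div_apply, le_div_iff₀ (by positivity)]
  linarith

theorem Wmap_a_pow_k1_tendsto_zero_lt_one_general (hs₁ : 1 < s₁) (hs₂ : 1 < s₂) (p q : ℝ)
    (hr : 0 < r) (hsum : 1 / s₁ + 1 / s₂ < 1) :
    Tendsto (fun a => a * (s₁ + p * a) ^ kIndex1 s₁ s₂ p q r a) (𝓝[>] 0) (𝓝 0) := by
  refine tendsto_mul_pow_zero_of_isBigO_one (c := 2) (d := 3) (by norm_num)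
    (tendsto_id.mono_left nhdsWithin_le_nhds) ?_ (.of_forall fun a => Nat.mul_div_le _ 3)
    (mul_pow_kIndex_isBigO_one hs₁ (fixedPointGap_pos hs₁ (by linarith) hsum) p q hr)
  filter_upwards [(tendsto_add_mul_nhdsGT_zero s₁ p).eventually_const_lt hs₁] with a hta
  exact hta.le

end Limit

/-- Lemma 5(III): if `1/s₁ + 1/s₂ < 1`, then `a·(s₁+pa)^{k₁(a)} → 0` as `a → 0⁺`,
where `k₁(a) = ⌊2k(a)/3⌋`. -/
theorem Wmap_a_pow_k1_tendsto_zero_lt_one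
    (s₁ s₂ p q r : ℝ) (hs₁ : 1 < s₁) (hs₂ : 1 < s₂)
    (hp : 0 < p) (hq : 0 < q) (hr : 0 < r)
    (hsum : 1/s₁ + 1/s₂ < 1) :
    Tendsto (fun a => a * (s₁ + p*a)^(kIndex1 s₁ s₂ p q r a))
      (𝓝[>] (0:ℝ)) (𝓝 0) :=
  Wmap_a_pow_k1_tendsto_zero_lt_one_general hs₁ hs₂ p q hr hsum
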